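/- arXiv:2006.06849 — 3 statements merged into one kernel-verified Lean document; each statement's English description precedes it below -/
import Mathlib

section
/- For all α₁, α₂, α₃, α₄ ∈ (0, π), writing tᵢ = tan(αᵢ/2): the equation sin((α₂ − α₁)/2)/sin((α₂ + α₁)/2) = ± sin((α₄ − α₃)/2)/sin((α₄ + α₃)/2) (i.e., equality holds with one of the two signs) is satisfied if and only if t₁/t₂ = t₃/t₄ or t₁/t₂ = t₄/t₃. -/
open Real

/-
Put `aᵢⱼ = sin θᵢ * cos θⱼ`, where `θᵢ = αᵢ / 2`. By the addition formulas the left-hand ratio is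
`(a₂₁ - a₁₂) / (a₂₁ + a₁₂)`, while `t₁ / t₂ = a₁₂ / a₂₁`. So the first is the image of the second
under the injective Möbius map `r ↦ (1 - r) / (1 + r)`. Exchanging `θ₃` and `θ₄` negates the
right-hand ratio and inverts `t₃ / t₄`, which accounts for the other sign.
-/

lemma sub_div_add_eq_sub_div_add_iff {K : Type*} [Field K] [NeZero (2 : K)] {a b c d : K}
    (hb : b ≠ 0) (hd : d ≠ 0) (hba : b + a ≠ 0) (hdc : d + c ≠ 0) :
    (b - a) / (b + a) = (d - c) / (d + c) ↔ a / b = c / d := by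
  have cross_sub : (b - a) * (d + c) - (d - c) * (b + a) = 2 * (c * b - a * d) := by ring
  rw [div_eq_div_iff hba hdc, div_eq_div_iff hb hd, ← sub_eq_zero, cross_sub, mul_eq_zero,
    or_iff_right two_ne_zero, sub_eq_zero, eq_comm]

lemma tan_div_tan_eq_sin_mul_cos_div (x y : ℝ) :
    tan x / tan y = sin x * cos y / (sin y * cos x) := by
  rw [tan_eq_sin_div_cos, tan_eq_sin_div_cos, div_div_div_eq, mul_comm (cos x)]

lemma sin_sub_div_sin_add_eq_iff_tan_div_tan_eq {x y z w : ℝ}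
    (hx : cos x ≠ 0) (hy : sin y ≠ 0) (hz : cos z ≠ 0) (hw : sin w ≠ 0)
    (hyx : sin (y + x) ≠ 0) (hwz : sin (w + z) ≠ 0) :
    sin (y - x) / sin (y + x) = sin (w - z) / sin (w + z) ↔ tan x / tan y = tan z / tan w := by
  have sin_sub_eq (u v : ℝ) : sin (u - v) = sin u * cos v - sin v * cos u := by
    rw [sin_sub, mul_comm (cos u)]
  have sin_add_eq (u v : ℝ) : sin (u + v) = sin u * cos v + sin v * cos u := by
    rw [sin_add, mul_comm (cos u)]
  simp only [tan_div_tan_eq_sin_mul_cos_div, sin_sub_eq, sin_add_eq] at hyx hwz ⊢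
  exact sub_div_add_eq_sub_div_add_iff (mul_ne_zero hy hx) (mul_ne_zero hw hz) hyx hwz

lemma neg_sin_sub_div_sin_add (x y : ℝ) :
    -(sin (x - y) / sin (x + y)) = sin (y - x) / sin (y + x) := by
  rw [← neg_div, ← sin_neg, neg_sub, add_comm]

-- `tan` takes the junk value `0` at its poles, so `tan x ≠ 0` rules these out as well.
lemma sin_ne_zero_and_cos_ne_zero_of_tan_ne_zero {x : ℝ} (hx : tan x ≠ 0) :
    sin x ≠ 0 ∧ cos x ≠ 0 := by
  rwa [tan_eq_sin_div_cos, div_ne_zero_iff] at hx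

theorem stmt7_general {θ₁ θ₂ θ₃ θ₄ : ℝ}
    (h₁ : cos θ₁ ≠ 0) (h₂ : tan θ₂ ≠ 0) (h₃ : tan θ₃ ≠ 0) (h₄ : tan θ₄ ≠ 0)
    (h₂₁ : sin (θ₂ + θ₁) ≠ 0) (h₄₃ : sin (θ₄ + θ₃) ≠ 0) :
    (sin (θ₂ - θ₁) / sin (θ₂ + θ₁) = sin (θ₄ - θ₃) / sin (θ₄ + θ₃) ∨
      sin (θ₂ - θ₁) / sin (θ₂ + θ₁) = -(sin (θ₄ - θ₃) / sin (θ₄ + θ₃))) ↔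
    (tan θ₁ / tan θ₂ = tan θ₃ / tan θ₄ ∨ tan θ₁ / tan θ₂ = tan θ₄ / tan θ₃) := by
  have hsin₂ := (sin_ne_zero_and_cos_ne_zero_of_tan_ne_zero h₂).1
  have ⟨hsin₃, hcos₃⟩ := sin_ne_zero_and_cos_ne_zero_of_tan_ne_zero h₃
  have ⟨hsin₄, hcos₄⟩ := sin_ne_zero_and_cos_ne_zero_of_tan_ne_zero h₄
  have h₃₄ : sin (θ₃ + θ₄) ≠ 0 := by rwa [add_comm]
  rw [neg_sin_sub_div_sin_add]
  exact or_congr (sin_sub_div_sin_add_eq_iff_tan_div_tan_eq h₁ hsin₂ hcos₃ hsin₄ h₂₁ h₄₃)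
    (sin_sub_div_sin_add_eq_iff_tan_div_tan_eq h₁ hsin₂ hcos₄ hsin₃ h₂₁ h₃₄)

lemma cos_half_pos {α : ℝ} (hα : α ∈ Set.Ioo (-π) π) : 0 < cos (α / 2) :=
  cos_pos_of_mem_Ioo ⟨by linarith [hα.1], by linarith [hα.2]⟩

lemma tan_half_pos {α : ℝ} (hα : α ∈ Set.Ioo 0 π) : 0 < tan (α / 2) :=
  tan_pos_of_pos_of_lt_pi_div_two (half_pos hα.1) (div_lt_div_of_pos_right hα.2 two_pos)

lemma sin_half_add_half_pos {α β : ℝ} (hα : α ∈ Set.Ioo 0 π) (hβ : β ∈ Set.Ioo 0 π) :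
    0 < sin (α / 2 + β / 2) :=
  sin_pos_of_pos_of_lt_pi (by linarith [hα.1, hβ.1]) (by linarith [hα.2, hβ.2])

theorem stmt7 (α₁ α₂ α₃ α₄ : ℝ)
    (h₁ : α₁ ∈ Set.Ioo 0 π) (h₂ : α₂ ∈ Set.Ioo 0 π)
    (h₃ : α₃ ∈ Set.Ioo 0 π) (h₄ : α₄ ∈ Set.Ioo 0 π) :
    (Real.sin ((α₂ - α₁) / 2) / Real.sin ((α₂ + α₁) / 2) =
        Real.sin ((α₄ - α₃) / 2) / Real.sin ((α₄ + α₃) / 2) ∨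
     Real.sin ((α₂ - α₁) / 2) / Real.sin ((α₂ + α₁) / 2) =
        -(Real.sin ((α₄ - α₃) / 2) / Real.sin ((α₄ + α₃) / 2))) ↔
    (Real.tan (α₁ / 2) / Real.tan (α₂ / 2) = Real.tan (α₃ / 2) / Real.tan (α₄ / 2) ∨
     Real.tan (α₁ / 2) / Real.tan (α₂ / 2) = Real.tan (α₄ / 2) / Real.tan (α₃ / 2)) := by
  simp only [sub_div, add_div]
  exact stmt7_general (cos_half_pos ⟨(neg_lt_zero.2 pi_pos).trans h₁.1, h₁.2⟩).ne'
    (tan_half_pos h₂).ne' (tan_half_pos h₃).ne' (tan_half_pos h₄).ne'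
    (sin_half_add_half_pos h₂ h₁).ne' (sin_half_add_half_pos h₄ h₃).ne'
end

section
/- Let α₁, α₂ ∈ (0, π) with α₁ + α₂ ≠ π, set α₃ = π − α₁ and α₄ = π − α₂, let ρ₁ ∈ (0, π), and set ξ = arccos(cos α₁ cos α₂ − sin α₁ sin α₂ cos ρ₁). Set u = (cos α₂ cos ξ − cos α₁)/(sin α₂ sin ξ) and v = (cos α₁ cos ξ − cos α₂)/(sin α₁ sin ξ), and let ρ₂ = arccos(u) + arccos(v) (the branch-2 formula of equation (3)). If ρ₂ ≠ π, then tan(ρ₂/2) = −(cos((α₂ − α₁)/2)/cos((α₂ + α₁)/2)) · tan(ρ₁/2); moreover the branch-2 formulas give ρ₃ = −arccos((cos α₃ cos α₄ − cos ξ)/(sin α₃ sin α₄)) = −ρ₁ and ρ₄ = arccos(v) + arccos(u) = ρ₂. -/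
open Real

/-!
Read on the unit sphere, `ξ` is the third side of a spherical triangle with sides `α₁`, `α₂`
enclosing the exterior angle `ρ₁`, and `arccos u`, `arccos v` are its other two exterior angles.
Hence the formula for `tan (ρ₂ / 2)` is Napier's analogy written with exterior angles: the cosine
rule and the law of sines express the sums of the cosines and of the sines of the two angles in
terms of `α₁`, `α₂`, `ρ₁`, and their quotient is the tangent of half the sum of the angles.
-/

section HalfAngle

variable {x y : ℝ}

lemma tan_half_add (h : sin x + sin y ≠ 0) :
    tan ((x + y) / 2) = (sin x + sin y) / (cos x + cos y) := by
  rw [sin_add_sin] at h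
  rw [sin_add_sin, cos_add_cos, mul_div_mul_right _ _ (right_ne_zero_of_mul h),
    mul_div_mul_left _ _ two_ne_zero, tan_eq_sin_div_cos]

lemma sin_add_sin_div_sin_add (h : sin x + sin y ≠ 0) :
    (sin x + sin y) / sin (x + y) = cos ((x - y) / 2) / cos ((x + y) / 2) := by
  have hdouble : sin (x + y) = 2 * sin ((x + y) / 2) * cos ((x + y) / 2) := by
    rw [← sin_two_mul, mul_div_cancel₀ _ two_ne_zero]
  rw [sin_add_sin] at h
  rw [sin_add_sin, hdouble, mul_div_mul_left _ _ (left_ne_zero_of_mul h)]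

lemma sin_div_one_add_cos (x : ℝ) : sin x / (1 + cos x) = tan (x / 2) := by
  have hsin : sin x = 2 * cos (x / 2) * sin (x / 2) := by
    rw [mul_right_comm, ← sin_two_mul, mul_div_cancel₀ _ two_ne_zero]
  have hcos : 1 + cos x = 2 * cos (x / 2) * cos (x / 2) := by
    have hdouble := cos_two_mul (x / 2)
    rw [mul_div_cancel₀ _ two_ne_zero] at hdouble
    linear_combination hdouble
  rcases eq_or_ne (cos (x / 2)) 0 with h | h
  · rw [hsin, tan_eq_sin_div_cos, h, mul_zero, zero_mul, zero_div, div_zero]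
  · rw [hsin, hcos, mul_div_mul_left _ _ (mul_ne_zero two_ne_zero h), tan_eq_sin_div_cos]

end HalfAngle

/-- The third side of a spherical triangle with sides `a` and `b`, given by the cosine rule. The
angle between the two sides is described by its exterior angle `γ`, which is the fold angle in the
origami setting; hence the minus sign. -/
noncomputable def sphericalSide (a b γ : ℝ) : ℝ :=
  arccos (cos a * cos b - sin a * sin b * cos γ)

/-- The exterior angle opposite the side `a` of a spherical triangle with sides `a`, `b`, `c`,
given by the cosine rule. -/
noncomputable def sphericalExteriorAngle (a b c : ℝ) : ℝ :=
  arccos ((cos b * cos c - cos a) / (sin b * sin c))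

section SphericalTriangle

variable {a b γ : ℝ}

lemma sphericalSide_comm (a b γ : ℝ) : sphericalSide a b γ = sphericalSide b a γ := by
  rw [sphericalSide, sphericalSide, mul_comm (cos a), mul_comm (sin a)]

lemma sphericalSide_pi_sub_pi_sub (a b γ : ℝ) :
    sphericalSide (π - a) (π - b) γ = sphericalSide a b γ := by
  simp only [sphericalSide, cos_pi_sub, sin_pi_sub, neg_mul_neg]

-- The three squared terms are the coordinates of one vertex of the triangle in an orthonormal
-- frame adapted to the side `b`.
lemma sphericalTriangle_sum_sq (a b γ : ℝ) :
    (cos a * cos b - sin a * sin b * cos γ) ^ 2 + (sin a * sin γ) ^ 2 +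
      (cos a * sin b + sin a * cos b * cos γ) ^ 2 = 1 := by
  linear_combination (cos a ^ 2 + sin a ^ 2 * cos γ ^ 2) * sin_sq_add_cos_sq b +
    sin a ^ 2 * sin_sq_add_cos_sq γ + sin_sq_add_cos_sq a

lemma cos_sphericalSide (a b γ : ℝ) :
    cos (sphericalSide a b γ) = cos a * cos b - sin a * sin b * cos γ := by
  have hsq : (cos a * cos b - sin a * sin b * cos γ) ^ 2 ≤ 1 := by
    linarith [sphericalTriangle_sum_sq a b γ, sq_nonneg (sin a * sin γ),
      sq_nonneg (cos a * sin b + sin a * cos b * cos γ)]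
  have habs := abs_le.1 ((sq_le_one_iff_abs_le_one _).1 hsq)
  exact cos_arccos habs.1 habs.2

lemma sin_sphericalSide_nonneg (a b γ : ℝ) : 0 ≤ sin (sphericalSide a b γ) :=
  sin_nonneg_of_mem_Icc ⟨arccos_nonneg _, arccos_le_pi _⟩

lemma sin_sphericalSide_sq (a b γ : ℝ) :
    sin (sphericalSide a b γ) ^ 2 =
      (sin a * sin γ) ^ 2 + (cos a * sin b + sin a * cos b * cos γ) ^ 2 := by
  rw [sin_sq, cos_sphericalSide]
  linear_combination -sphericalTriangle_sum_sq a b γ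

lemma sin_sphericalSide_ne_zero (ha : sin a ≠ 0) (hγ : sin γ ≠ 0) (b : ℝ) :
    sin (sphericalSide a b γ) ≠ 0 := by
  refine pow_ne_zero_iff two_ne_zero |>.1 (ne_of_gt ?_)
  rw [sin_sphericalSide_sq]
  positivity

lemma sphericalExteriorAngle_sphericalSide (ha : sin a ≠ 0) (hb : sin b ≠ 0)
    (hγ : γ ∈ Set.Icc 0 π) : sphericalExteriorAngle (sphericalSide a b γ) a b = γ := by
  rw [sphericalExteriorAngle, cos_sphericalSide, sub_sub_cancel,
    mul_div_cancel_left₀ _ (mul_ne_zero ha hb), arccos_cos hγ.1 hγ.2]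

lemma cos_sphericalExteriorAngle_mul_sin (a γ : ℝ) (hb : sin b ≠ 0) :
    cos (sphericalExteriorAngle a b (sphericalSide a b γ)) * sin (sphericalSide a b γ) =
      -(cos a * sin b + sin a * cos b * cos γ) := by
  set c := sphericalSide a b γ with hc
  set X := cos a * sin b + sin a * cos b * cos γ with hX
  have hX_abs : |X| ≤ sin c := by
    refine abs_le_of_sq_le_sq ?_ (sin_sphericalSide_nonneg a b γ)
    rw [hc, sin_sphericalSide_sq]
    exact le_add_of_nonneg_left (sq_nonneg _)
  have hquot : (cos b * cos c - cos a) / (sin b * sin c) = -X / sin c := by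
    have hnum : cos b * cos c - cos a = sin b * -X := by
      rw [hc, hX, cos_sphericalSide]
      linear_combination cos a * sin_sq_add_cos_sq b
    rw [hnum, mul_div_mul_left _ _ hb]
  have hquot_abs : |-X / sin c| ≤ 1 := by
    rw [abs_div, abs_neg]
    exact div_le_one_of_le₀ (hX_abs.trans (le_abs_self _)) (abs_nonneg _)
  rw [sphericalExteriorAngle, hquot,
    cos_arccos (abs_le.1 hquot_abs).1 (abs_le.1 hquot_abs).2]
  refine div_mul_cancel_of_imp fun hc₀ => ?_
  rw [hc₀] at hX_abs
  rw [abs_nonpos_iff.1 hX_abs, neg_zero]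

lemma sin_sphericalExteriorAngle_mul_sin (hb : sin b ≠ 0) (h : 0 ≤ sin a * sin γ) :
    sin (sphericalExteriorAngle a b (sphericalSide a b γ)) * sin (sphericalSide a b γ) =
      sin a * sin γ := by
  have hangle : 0 ≤ sin (sphericalExteriorAngle a b (sphericalSide a b γ)) :=
    sin_nonneg_of_mem_Icc ⟨arccos_nonneg _, arccos_le_pi _⟩
  rw [← sq_eq_sq₀ (mul_nonneg hangle (sin_sphericalSide_nonneg a b γ)) h, mul_pow, sin_sq,
    sub_mul, one_mul, ← mul_pow, cos_sphericalExteriorAngle_mul_sin a γ hb, sin_sphericalSide_sq,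
    neg_sq, add_sub_cancel_right]

lemma sin_add_sin_sphericalExteriorAngle_mul_sin (ha : 0 < sin a) (hb : 0 < sin b)
    (hγ : 0 ≤ sin γ) :
    (sin (sphericalExteriorAngle a b (sphericalSide a b γ)) +
        sin (sphericalExteriorAngle b a (sphericalSide a b γ))) * sin (sphericalSide a b γ) =
      (sin a + sin b) * sin γ := by
  have hA := sin_sphericalExteriorAngle_mul_sin hb.ne' (mul_nonneg ha.le hγ)
  have hB := sin_sphericalExteriorAngle_mul_sin ha.ne' (mul_nonneg hb.le hγ)
  rw [sphericalSide_comm b a] at hB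
  rw [add_mul, add_mul, hA, hB]

lemma cos_add_cos_sphericalExteriorAngle_mul_sin (γ : ℝ) (ha : sin a ≠ 0) (hb : sin b ≠ 0) :
    (cos (sphericalExteriorAngle a b (sphericalSide a b γ)) +
        cos (sphericalExteriorAngle b a (sphericalSide a b γ))) * sin (sphericalSide a b γ) =
      -(sin (a + b) * (1 + cos γ)) := by
  have hA := cos_sphericalExteriorAngle_mul_sin a γ hb
  have hB := cos_sphericalExteriorAngle_mul_sin b γ ha
  rw [sphericalSide_comm b a] at hB
  rw [add_mul, hA, hB, sin_add]
  ring

-- When `a + b = π` (modulo `2π`), both sides are `0` by convention: the left-hand side is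
-- `tan (π / 2)` and the quotient on the right has denominator `0`.
theorem tan_half_add_sphericalExteriorAngle (ha : 0 < sin a) (hb : 0 < sin b) (hγ : 0 < sin γ) :
    tan ((sphericalExteriorAngle a b (sphericalSide a b γ) +
        sphericalExteriorAngle b a (sphericalSide a b γ)) / 2) =
      -(cos ((a - b) / 2) / cos ((a + b) / 2)) * tan (γ / 2) := by
  have hc := sin_sphericalSide_ne_zero ha.ne' hγ.ne' b
  have hsin := sin_add_sin_sphericalExteriorAngle_mul_sin ha hb hγ.le
  have hcos := cos_add_cos_sphericalExteriorAngle_mul_sin γ ha.ne' hb.ne'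
  set c := sphericalSide a b γ
  set A := sphericalExteriorAngle a b c
  set B := sphericalExteriorAngle b a c
  have hsides : sin a + sin b ≠ 0 := (add_pos ha hb).ne'
  have hangles : sin A + sin B ≠ 0 :=
    left_ne_zero_of_mul (hsin ▸ mul_ne_zero hsides hγ.ne')
  calc tan ((A + B) / 2)
      = ((sin A + sin B) * sin c) / ((cos A + cos B) * sin c) := by
        rw [tan_half_add hangles, mul_div_mul_right _ _ hc]
    _ = -((sin a + sin b) / sin (a + b)) * (sin γ / (1 + cos γ)) := by
        rw [hsin, hcos, div_neg, mul_div_mul_comm, neg_mul]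
    _ = -(cos ((a - b) / 2) / cos ((a + b) / 2)) * tan (γ / 2) := by
        rw [sin_add_sin_div_sin_add hsides, sin_div_one_add_cos]

end SphericalTriangle

theorem stmt15 (α₁ α₂ ρ₁ : ℝ)
    (h₁ : α₁ ∈ Set.Ioo 0 π) (h₂ : α₂ ∈ Set.Ioo 0 π) (h12 : α₁ + α₂ ≠ π)
    (hρ : ρ₁ ∈ Set.Ioo 0 π) :
    let α₃ := π - α₁
    let α₄ := π - α₂
    let ξ := Real.arccos (Real.cos α₁ * Real.cos α₂ - Real.sin α₁ * Real.sin α₂ * Real.cos ρ₁)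
    let u := (Real.cos α₂ * Real.cos ξ - Real.cos α₁) / (Real.sin α₂ * Real.sin ξ)
    let v := (Real.cos α₁ * Real.cos ξ - Real.cos α₂) / (Real.sin α₁ * Real.sin ξ)
    let ρ₂ := Real.arccos u + Real.arccos v
    (ρ₂ ≠ π →
      Real.tan (ρ₂ / 2) =
        -(Real.cos ((α₂ - α₁) / 2) / Real.cos ((α₂ + α₁) / 2)) * Real.tan (ρ₁ / 2)) ∧
    -Real.arccos ((Real.cos α₃ * Real.cos α₄ - Real.cos ξ) / (Real.sin α₃ * Real.sin α₄)) = -ρ₁ ∧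
    Real.arccos v + Real.arccos u = ρ₂ := by
  intro α₃ α₄ ξ u v ρ₂
  have hα₁ : 0 < sin α₁ := sin_pos_of_mem_Ioo h₁
  have hα₂ : 0 < sin α₂ := sin_pos_of_mem_Ioo h₂
  have hα₃ : sin α₃ ≠ 0 := (sin_pi_sub α₁).trans_ne hα₁.ne'
  have hα₄ : sin α₄ ≠ 0 := (sin_pi_sub α₂).trans_ne hα₂.ne'
  have hξ : ξ = sphericalSide α₂ α₁ ρ₁ := sphericalSide_comm α₁ α₂ ρ₁
  have hξ' : ξ = sphericalSide α₃ α₄ ρ₁ := (sphericalSide_pi_sub_pi_sub α₁ α₂ ρ₁).symm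
  have hρ₂ : ρ₂ = sphericalExteriorAngle α₂ α₁ ξ + sphericalExteriorAngle α₁ α₂ ξ :=
    add_comm _ _
  have hρ₃ : sphericalExteriorAngle ξ α₃ α₄ = ρ₁ := by
    rw [hξ', sphericalExteriorAngle_sphericalSide hα₃ hα₄ (Set.Ioo_subset_Icc_self hρ)]
  refine ⟨fun _ => ?_, congrArg Neg.neg hρ₃, add_comm _ _⟩
  rw [hρ₂, hξ, tan_half_add_sphericalExteriorAngle hα₂ hα₁ (sin_pos_of_mem_Ioo hρ)]
end

section
/- Let α₁, α₂ ∈ (0, π), set α₄ = π − α₁ and α₃ = π − α₂ (the straight-line case, where opposite creases c₁ and c₃ are collinear), let ρ₁ ∈ [0, π], and set ξ = arccos(cos α₁ cos α₂ − sin α₁ sin α₂ cos ρ₁), assumed to lie in (0, π). Then the branch-2 formulas of equation (3) reduce to: ρ₂ = 2·arccos((cos α₂ cos ξ − cos α₁)/(sin α₂ sin ξ)), ρ₃ = −arccos((cos α₃ cos α₄ − cos ξ)/(sin α₃ sin α₄)) = −ρ₁, and ρ₄ = 2·arccos((cos α₁ cos ξ − cos α₂)/(sin α₁ sin ξ)).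 That is, arccos((cos α₄ − cos α₃ cos ξ)/(sin α₃ sin ξ)) = arccos((cos α₂ cos ξ − cos α₁)/(sin α₂ sin ξ)), arccos((cos α₃ − cos α₄ cos ξ)/(sin α₄ sin ξ)) = arccos((cos α₁ cos ξ − cos α₂)/(sin α₁ sin ξ)), and arccos((cos α₃ cos α₄ − cos ξ)/(sin α₃ sin α₄)) = ρ₁. -/
open Real

/-!
Cut the vertex along the plane through the creases `c₂` and `c₄`, which make the angle `ξ`: the
sectors `α₁`, `α₂` and the sectors `α₃`, `α₄` become the sides of two spherical triangles with
common side `ξ`. When `α₄ = π - α₁` and `α₃ = π - α₂`, these triangles are colunar up to a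
reflection in the common side, so their angles at the ends of `ξ` are supplementary and their angles
opposite `ξ` are equal.
-/

/-- The angle `ξ` between the outer creases of two adjacent sectors with angles `a` and `b`, when
their common crease is folded by `ρ`. The interior dihedral angle at that crease is `π - ρ`, whence
the minus sign in this form of the spherical law of cosines. -/
noncomputable def diagonalAngle (a b ρ : ℝ) : ℝ :=
  arccos (cos a * cos b - sin a * sin b * cos ρ)

/-- The angle between the sides `a` and `b` of a spherical triangle with third side `x`. It is
meaningful only for `sin a ≠ 0` and `sin b ≠ 0`. -/
noncomputable def dihedralAngle (a b x : ℝ) : ℝ :=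
  arccos ((cos x - cos a * cos b) / (sin a * sin b))

/-- The unsigned fold angle of the crease between sectors `a` and `b` whose outer creases make the
angle `x`, i.e. the supplement of `dihedralAngle a b x`. It is meaningful only for `sin a ≠ 0` and
`sin b ≠ 0`. -/
noncomputable def foldAngle (a b x : ℝ) : ℝ :=
  arccos ((cos a * cos b - cos x) / (sin a * sin b))

theorem diagonalAngle_comm (a b ρ : ℝ) : diagonalAngle a b ρ = diagonalAngle b a ρ := by
  simp only [diagonalAngle, mul_comm]

theorem diagonalAngle_pi_sub_pi_sub (a b ρ : ℝ) :
    diagonalAngle (π - a) (π - b) ρ = diagonalAngle a b ρ := by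
  simp only [diagonalAngle, cos_pi_sub, sin_pi_sub, neg_mul_neg]

theorem dihedralAngle_pi_sub_pi_sub (a b x : ℝ) :
    dihedralAngle (π - a) b (π - x) = foldAngle a b x := by
  simp only [dihedralAngle, foldAngle, cos_pi_sub, sin_pi_sub]
  congr 2
  ring

theorem cos_mul_cos_sub_sin_mul_sin_mul_cos_mem_Icc (a b ρ : ℝ) :
    cos a * cos b - sin a * sin b * cos ρ ∈ Set.Icc (-1) 1 := by
  -- As `cos ρ` runs over `[-1, 1]`, this moves along the segment from `cos (a - b)` to
  -- `cos (a + b)`.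
  have convex_comb : cos a * cos b - sin a * sin b * cos ρ =
      (1 - cos ρ) / 2 * cos (a - b) + (1 + cos ρ) / 2 * cos (a + b) := by
    rw [cos_sub, cos_add]
    ring
  rw [convex_comb]
  have weight_sub_nonneg : 0 ≤ (1 - cos ρ) / 2 := by linarith [cos_le_one ρ]
  have weight_add_nonneg : 0 ≤ (1 + cos ρ) / 2 := by linarith [neg_one_le_cos ρ]
  exact convex_Icc (-1 : ℝ) 1 (cos_mem_Icc (a - b)) (cos_mem_Icc (a + b))
    weight_sub_nonneg weight_add_nonneg (by ring)

theorem cos_diagonalAngle (a b ρ : ℝ) :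
    cos (diagonalAngle a b ρ) = cos a * cos b - sin a * sin b * cos ρ :=
  have bounds := cos_mul_cos_sub_sin_mul_sin_mul_cos_mem_Icc a b ρ
  cos_arccos bounds.1 bounds.2

theorem foldAngle_diagonalAngle {a b ρ : ℝ} (ha : sin a ≠ 0) (hb : sin b ≠ 0)
    (hρ : ρ ∈ Set.Icc 0 π) : foldAngle a b (diagonalAngle a b ρ) = ρ := by
  rw [foldAngle, cos_diagonalAngle, sub_sub_cancel, mul_div_cancel_left₀ _ (mul_ne_zero ha hb),
    arccos_cos hρ.1 hρ.2]

theorem foldAngle_pi_sub_pi_sub_diagonalAngle {a b ρ : ℝ} (ha : sin a ≠ 0) (hb : sin b ≠ 0)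
    (hρ : ρ ∈ Set.Icc 0 π) : foldAngle (π - b) (π - a) (diagonalAngle a b ρ) = ρ := by
  rw [diagonalAngle_comm, ← diagonalAngle_pi_sub_pi_sub]
  exact foldAngle_diagonalAngle (by rwa [sin_pi_sub]) (by rwa [sin_pi_sub]) hρ

theorem stmt16_general {α₁ α₂ ρ₁ : ℝ} (h₁ : sin α₁ ≠ 0) (h₂ : sin α₂ ≠ 0)
    (hρ : ρ₁ ∈ Set.Icc 0 π) :
    let ξ := diagonalAngle α₁ α₂ ρ₁
    ξ ∈ Set.Ioo 0 π →
    dihedralAngle (π - α₂) ξ (π - α₁) = foldAngle α₂ ξ α₁ ∧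
    dihedralAngle (π - α₁) ξ (π - α₂) = foldAngle α₁ ξ α₂ ∧
    foldAngle (π - α₂) (π - α₁) ξ = ρ₁ :=
  fun _ => ⟨dihedralAngle_pi_sub_pi_sub _ _ _, dihedralAngle_pi_sub_pi_sub _ _ _,
    foldAngle_pi_sub_pi_sub_diagonalAngle h₁ h₂ hρ⟩

theorem stmt16 (α₁ α₂ ρ₁ : ℝ)
    (h₁ : α₁ ∈ Set.Ioo 0 π) (h₂ : α₂ ∈ Set.Ioo 0 π) (hρ : ρ₁ ∈ Set.Icc 0 π) :
    let α₄ := π - α₁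
    let α₃ := π - α₂
    let ξ := Real.arccos (Real.cos α₁ * Real.cos α₂ - Real.sin α₁ * Real.sin α₂ * Real.cos ρ₁)
    ξ ∈ Set.Ioo 0 π →
    Real.arccos ((Real.cos α₄ - Real.cos α₃ * Real.cos ξ) / (Real.sin α₃ * Real.sin ξ)) =
      Real.arccos ((Real.cos α₂ * Real.cos ξ - Real.cos α₁) / (Real.sin α₂ * Real.sin ξ)) ∧
    Real.arccos ((Real.cos α₃ - Real.cos α₄ * Real.cos ξ) / (Real.sin α₄ * Real.sin ξ)) =
      Real.arccos ((Real.cos α₁ * Real.cos ξ - Real.cos α₂) / (Real.sin α₁ * Real.sin ξ)) ∧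
    Real.arccos ((Real.cos α₃ * Real.cos α₄ - Real.cos ξ) / (Real.sin α₃ * Real.sin α₄)) = ρ₁ :=
  stmt16_general (sin_pos_of_mem_Ioo h₁).ne' (sin_pos_of_mem_Ioo h₂).ne' hρ
end
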